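/- For every integer n ≥ 3, with p = 2(n−1)/(n−2), there exists a constant C depending only on n such that for all v ≥ 0 and all w ∈ ℝ with v + w ≥ 0: | ((n−2)/(n−1)) v^p − (n/(n−2)) v^{2/(n−2)} w² + 2 (v+w)^{n/(n−2)} w − ((n−2)/(n−1)) (v+w)^p | ≤ C v^{max{0, p−3}} |w|^{min{p, 3}} + C |w|^p. -/

import Mathlib

theorem aux_sub {x y a : ℝ} (hx : 0 ≤ x) (hxy : x ≤ y) (ha : 0 ≤ a) (ha1 : a ≤ 1) :
    |y ^ a - x ^ a| ≤ |y - x| ^ a := by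
  have h1 := Real.rpow_add_le_add_rpow hx (sub_nonneg.2 hxy) ha ha1
  have h2 := Real.rpow_le_rpow hx hxy ha
  rw [abs_of_nonneg (by linarith), abs_of_nonneg (by linarith)]
  rw [add_sub_cancel] at h1
  linarith

theorem aux_main (a : ℝ) (ha : 0 < a) (ha1 : a ≤ 1) (v w : ℝ) (hv : 0 ≤ v) (hvw : 0 ≤ v + w) :
    |2 / (a + 2) * v ^ (a + 2) - (a + 1) * v ^ a * w ^ 2 + 2 * (v + w) ^ (a + 1) * w
      - 2 / (a + 2) * (v + w) ^ (a + 2)| ≤ 2 * (a + 1) * |w| ^ (a + 2) := by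
  have key := Convex.norm_image_sub_le_of_norm_hasDerivWithin_le
    (f := fun t : ℝ => 2 / (a + 2) * v ^ (a + 2) - (a + 1) * v ^ a * t ^ 2
      + 2 * (v + t) ^ (a + 1) * t - 2 / (a + 2) * (v + t) ^ (a + 2))
    (f' := fun t => 2 * (a + 1) * t * ((v + t) ^ a - v ^ a))
    (C := 2 * (a + 1) * |w| ^ (a + 1)) (s := Set.uIcc 0 w) (x := 0) (y := w)
    ?_ ?_ (convex_uIcc 0 w) Set.left_mem_uIcc Set.right_mem_uIcc
  · have e : |w| ^ (a + 2) = |w| ^ (a + 1) * |w| := by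
      rw [← Real.rpow_add_one' (abs_nonneg w) (by linarith)]; ring_nf
    simp only [Real.norm_eq_abs, sub_zero] at key
    rw [e, ← mul_assoc]
    convert key using 2
    simp
  · intro t ht
    apply HasDerivAt.hasDerivWithinAt
    have hid : HasDerivAt (fun t : ℝ => v + t) 1 t := (hasDerivAt_id t).const_add v
    have d1 := hid.rpow_const (p := a + 1) (Or.inr (by linarith))
    have d2 := hid.rpow_const (p := a + 2) (Or.inr (by linarith))
    have d3 := (((hasDerivAt_id t).pow 2).const_mul ((a + 1) * v ^ a)).const_sub
      (2 / (a + 2) * v ^ (a + 2))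
    have d4 := (d3.add ((d1.const_mul 2).mul (hasDerivAt_id t))).sub (d2.const_mul (2 / (a + 2)))
    refine d4.congr_deriv ?_
    have e1 : a + 1 - 1 = a := by ring
    have e2 : a + 2 - 1 = a + 1 := by ring
    rw [e1, e2]
    have : a + 2 ≠ 0 := by linarith
    simp only [id]
    field_simp
    ring
  · intro t ht
    have htw : |t| ≤ |w| := by
      have := Set.abs_sub_left_of_mem_uIcc ht
      simpa using this
    have hvt : 0 ≤ v + t := by
      rcases Set.mem_uIcc.1 ht with h | h <;> linarith [h.1]
    have h1 : |(v + t) ^ a - v ^ a| ≤ |t| ^ a := by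
      rcases le_total 0 t with h | h
      · simpa using aux_sub hv (show v ≤ v + t by linarith) ha.le ha1
      · have := aux_sub hvt (show v + t ≤ v by linarith) ha.le ha1
        rw [abs_sub_comm]
        simpa using this
    have h2 : |t| ^ a ≤ |w| ^ a := Real.rpow_le_rpow (abs_nonneg _) htw ha.le
    rw [Real.norm_eq_abs, abs_mul, abs_mul, abs_of_nonneg (by linarith : 0 ≤ 2 * (a + 1)),
      Real.rpow_add_one' (abs_nonneg w) (by linarith), mul_assoc, mul_comm (|w| ^ a)]
    gcongr
    exact h1.trans h2

/-- with `p = 2(n−1)/(n−2)` there is `C = C(n)` such that for all `v ≥ 0` and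
`w ∈ ℝ` with `v + w ≥ 0`,
`| ((n−2)/(n−1)) v^p − (n/(n−2)) v^{2/(n−2)} w² + 2 (v+w)^{n/(n−2)} w − ((n−2)/(n−1)) (v+w)^p |
≤ C v^{max{0,p−3}} |w|^{min{p,3}} + C |w|^p`. -/
theorem stmt_15 (n : ℕ) (hn : 3 ≤ n) :
    ∃ C : ℝ, 0 < C ∧ ∀ v w : ℝ, 0 ≤ v → 0 ≤ v + w →
      |((n : ℝ) - 2) / ((n : ℝ) - 1) * v ^ (2 * ((n : ℝ) - 1) / ((n : ℝ) - 2))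
          - (n : ℝ) / ((n : ℝ) - 2) * v ^ (2 / ((n : ℝ) - 2)) * w ^ 2
          + 2 * (v + w) ^ ((n : ℝ) / ((n : ℝ) - 2)) * w
          - ((n : ℝ) - 2) / ((n : ℝ) - 1) * (v + w) ^ (2 * ((n : ℝ) - 1) / ((n : ℝ) - 2))|
        ≤ C * v ^ max (0 : ℝ) (2 * ((n : ℝ) - 1) / ((n : ℝ) - 2) - 3)
              * |w| ^ min (2 * ((n : ℝ) - 1) / ((n : ℝ) - 2)) (3 : ℝ)
          + C * |w| ^ (2 * ((n : ℝ) - 1) / ((n : ℝ) - 2)) := by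
  rcases hn.eq_or_lt with rfl | hn
  · refine ⟨4, by norm_num, fun v w hv hvw => ?_⟩
    have e1 : 2 * (((3 : ℕ) : ℝ) - 1) / (((3 : ℕ) : ℝ) - 2) = ((4 : ℕ) : ℝ) := by norm_num
    have e2 : 2 / (((3 : ℕ) : ℝ) - 2) = ((2 : ℕ) : ℝ) := by norm_num
    have e3 : ((3 : ℕ) : ℝ) / (((3 : ℕ) : ℝ) - 2) = ((3 : ℕ) : ℝ) := by norm_num
    have e4 : (((3 : ℕ) : ℝ) - 2) / (((3 : ℕ) : ℝ) - 1) = 1 / 2 := by norm_num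
    have e5 : max (0 : ℝ) (((4 : ℕ) : ℝ) - 3) = ((1 : ℕ) : ℝ) := by norm_num
    have e6 : min ((4 : ℕ) : ℝ) (3 : ℝ) = ((3 : ℕ) : ℝ) := by norm_num
    rw [e1, e2, e3, e4, e5, e6]
    simp only [Real.rpow_natCast]
    push_cast
    have : 1 / 2 * v ^ 4 - 3 * v ^ 2 * w ^ 2 + 2 * (v + w) ^ 3 * w - 1 / 2 * (v + w) ^ 4
        = 4 * v * w ^ 3 + 3 / 2 * w ^ 4 := by ring
    rw [this]
    refine (abs_add_le _ _).trans ?_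
    simp only [abs_mul, abs_pow, abs_of_nonneg hv]
    norm_num
    have := pow_nonneg (abs_nonneg w) 4
    have h4 : |w| ^ 4 = w ^ 4 := by rw [← abs_pow, abs_of_nonneg (by positivity)]
    linarith
  · have hn' : (4 : ℝ) ≤ n := by exact_mod_cast hn
    have hm : (0 : ℝ) < (n : ℝ) - 2 := by linarith
    have hm1 : (0 : ℝ) < (n : ℝ) - 1 := by linarith
    obtain ⟨a, ha⟩ : ∃ a : ℝ, a = 2 / ((n : ℝ) - 2) := ⟨_, rfl⟩
    have ha0 : 0 < a := by rw [ha]; positivity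
    have ha1 : a ≤ 1 := by rw [ha, div_le_one hm]; linarith
    have e1 : 2 * ((n : ℝ) - 1) / ((n : ℝ) - 2) = a + 2 := by rw [ha]; field_simp; ring
    have e3 : (n : ℝ) / ((n : ℝ) - 2) = a + 1 := by rw [ha]; field_simp; ring
    have e4 : ((n : ℝ) - 2) / ((n : ℝ) - 1) = 2 / (a + 2) := by rw [← e1]; field_simp
    rw [e1, e3, e4, ← ha]
    refine ⟨2 * (a + 1), by positivity, fun v w hv hvw => ?_⟩
    refine (aux_main a ha0 ha1 v w hv hvw).trans ?_
    have : 0 ≤ 2 * (a + 1) * v ^ max (0 : ℝ) (a + 2 - 3) * |w| ^ min (a + 2) (3 : ℝ) := by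
      positivity
    linarith
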